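/- arXiv:2205.01921 — 4 statements merged into one kernel-verified Lean document; each statement's English description precedes it below -/
import Mathlib

section
/- Lemma (least-squares residual bound). Let a ≤ b be integers with ℓ = b − a + 1 ≥ 6, and let u_a,…,u_b be real numbers. For t ∈ [a,b] let x_t = [1, t − a + 1]ᵀ ∈ ℝ², let X ∈ ℝ^{ℓ×2} be the matrix whose rows are x_a,…,x_b, and let β = (XᵀX)^{−1} Xᵀ u_{a:b} be the least-squares coefficient fitting labels u_t against covariates x_t. Then for every t ∈ [a,b], |βᵀ x_t − u_t| ≤ 20 · ℓ · ‖D² u_{a:b}‖₁. -/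
/-- Covariate `x_t = [1, t - a + 1]ᵀ` for an interval starting at `a`. -/
noncomputable def xv (a t : ℕ) : Fin 2 → ℝ := ![1, (t : ℝ) - (a : ℝ) + 1]

/-- `‖D² u_{a:b}‖₁` of the subsequence `u_a, …, u_b`. -/
noncomputable def tv2 (u : ℕ → ℝ) (a b : ℕ) : ℝ :=
  ∑ t ∈ Finset.Icc a (b - 2), |u (t + 2) - 2 * u (t + 1) + u t|

/-!
The residuals `e` of a least-squares line fit are orthogonal to the constants and to the
covariate. By the strict form of Chebyshev's sum inequality a strictly monotone sequence cannot be
orthogonal to both, so the increments of `e` change sign, and since `∑ e = 0` so do its values.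
A sequence that changes sign is bounded by its total variation. Applied to the increments, this
bounds each of them by `‖D² e‖₁`; applied to `e` itself, it bounds each residual by
`(b - a) ‖D² e‖₁`. Finally `D²` annihilates the fitted line, so `‖D² e‖₁ = ‖D² u‖₁`.
-/

open Finset Matrix
open scoped fwdDiff

theorem sum_residual_smul_eq_zero {ι n R : Type*} [Fintype n] [DecidableEq n] [CommRing R]
    {S : Finset ι} {x : ι → n → R} {y : ι → R} {β : n → R}
    (hG : IsUnit (∑ s ∈ S, vecMulVec (x s) (x s)).det)
    (hβ : β = (∑ s ∈ S, vecMulVec (x s) (x s))⁻¹ *ᵥ ∑ s ∈ S, y s • x s) :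
    ∑ s ∈ S, (β ⬝ᵥ x s - y s) • x s = 0 := by
  have normal : ∑ s ∈ S, (β ⬝ᵥ x s) • x s = ∑ s ∈ S, y s • x s := calc
    ∑ s ∈ S, (β ⬝ᵥ x s) • x s = (∑ s ∈ S, vecMulVec (x s) (x s)) *ᵥ β := by
      simp only [sum_mulVec, vecMulVec_mulVec, op_smul_eq_smul, dotProduct_comm β]
    _ = ∑ s ∈ S, y s • x s := by rw [hβ, mulVec_mulVec, mul_nonsing_inv _ hG, one_mulVec]
  simp only [sub_smul, sum_sub_distrib, normal, sub_self]

theorem nontrivial_Icc_of_lt {α : Type*} [PartialOrder α] [LocallyFiniteOrder α] {a b : α}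
    (hab : a < b) : (Icc a b).Nontrivial :=
  ⟨a, left_mem_Icc.2 hab.le, b, right_mem_Icc.2 hab.le, hab.ne⟩

section Chebyshev

variable {ι R : Type*} [CommRing R]

theorem sum_sum_sub_mul_sub (S : Finset ι) (f g : ι → R) :
    ∑ i ∈ S, ∑ j ∈ S, (f i - f j) * (g i - g j) =
      2 * (#S * ∑ i ∈ S, f i * g i - (∑ i ∈ S, f i) * ∑ i ∈ S, g i) := by
  simp only [sub_mul, mul_sub, sum_sub_distrib, sum_const, nsmul_eq_mul,
    ← mul_sum, ← sum_mul]
  ring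

variable [LinearOrder R] [IsStrictOrderedRing R] {S : Finset ι} {f g : ι → R}

theorem sum_mul_sum_lt_card_mul_sum (hS : S.Nontrivial)
    (hfg : (S : Set ι).Pairwise fun i j => 0 < (f i - f j) * (g i - g j)) :
    (∑ i ∈ S, f i) * ∑ i ∈ S, g i < #S * ∑ i ∈ S, f i * g i := by
  have nonneg : ∀ i ∈ S, ∀ j ∈ S, 0 ≤ (f i - f j) * (g i - g j) := fun i hi j hj => by
    obtain rfl | hij := eq_or_ne i j
    · simp
    · exact (hfg hi hj hij).le
  obtain ⟨i, hi, j, hj, hij⟩ := hS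
  have pos : 0 < ∑ i ∈ S, ∑ j ∈ S, (f i - f j) * (g i - g j) :=
    sum_pos' (fun k hk => sum_nonneg (nonneg k hk))
      ⟨i, hi, sum_pos' (nonneg i hi) ⟨j, hj, hfg hi hj hij⟩⟩
  rw [sum_sum_sub_mul_sub] at pos
  exact sub_pos.1 (pos_of_mul_pos_right pos zero_le_two)

theorem sum_mul_sum_lt_card_mul_sum_of_strictMonoOn [LinearOrder ι] (hS : S.Nontrivial)
    (hf : StrictMonoOn f S) (hg : StrictMonoOn g S) :
    (∑ i ∈ S, f i) * ∑ i ∈ S, g i < #S * ∑ i ∈ S, f i * g i := by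
  refine sum_mul_sum_lt_card_mul_sum hS fun i hi j hj hij => ?_
  obtain hij | hji := lt_or_gt_of_ne hij
  · exact mul_pos_of_neg_of_neg (sub_neg.2 (hf hi hj hij)) (sub_neg.2 (hg hi hj hij))
  · exact mul_pos (sub_pos.2 (hf hj hi hji)) (sub_pos.2 (hg hj hi hji))

theorem det_sum_vecMulVec_one_pos (hS : S.Nontrivial) (hf : Set.InjOn f S) :
    0 < (∑ i ∈ S, vecMulVec ![1, f i] ![1, f i]).det := by
  have chebyshev := sum_mul_sum_lt_card_mul_sum hS fun i hi j hj hij =>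
    mul_self_pos.2 (sub_ne_zero.2 (hf.ne hi hj hij))
  simpa [det_fin_two, Matrix.sum_apply, vecMulVec_apply] using chebyshev

end Chebyshev

section SignChange

variable {G : Type*} [AddCommGroup G] [LinearOrder G] [IsOrderedAddMonoid G] {a b : ℕ}

theorem abs_sub_le_sum_abs_fwdDiff (f : ℕ → G) {m n : ℕ} (hm : m ∈ Icc a b) (hn : n ∈ Icc a b) :
    |f m - f n| ≤ ∑ s ∈ Ico a b, |Δ_[1] f s| := by
  wlog hnm : n ≤ m generalizing m n
  · rw [abs_sub_comm]
    exact this hn hm (le_of_not_ge hnm)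
  rw [mem_Icc] at hm hn
  calc |f m - f n| = |∑ s ∈ Ico n m, Δ_[1] f s| := congrArg _ (sum_Ico_sub f hnm).symm
    _ ≤ ∑ s ∈ Ico n m, |Δ_[1] f s| := abs_sum_le_sum_abs _ _
    _ ≤ ∑ s ∈ Ico a b, |Δ_[1] f s| :=
      sum_le_sum_of_subset_of_nonneg (Ico_subset_Ico hn.1 hm.2) fun _ _ _ => abs_nonneg _

theorem abs_le_sum_abs_fwdDiff_of_sign_change {f : ℕ → G} {p q t : ℕ}
    (hp : p ∈ Icc a b) (hfp : f p ≤ 0) (hq : q ∈ Icc a b) (hfq : 0 ≤ f q) (ht : t ∈ Icc a b) :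
    |f t| ≤ ∑ s ∈ Ico a b, |Δ_[1] f s| := by
  refine abs_le'.2 ⟨?_, ?_⟩
  · calc f t ≤ f t - f p := le_sub_self_iff _ |>.2 hfp
      _ ≤ _ := (le_abs_self _).trans (abs_sub_le_sum_abs_fwdDiff f ht hp)
  · calc -f t ≤ f q - f t := neg_le_sub_iff_le_add.2 (by simpa using hfq)
      _ ≤ _ := (le_abs_self _).trans (abs_sub_le_sum_abs_fwdDiff f hq ht)

end SignChange

section Orthogonal

variable {R : Type*} [CommRing R] [LinearOrder R] [IsStrictOrderedRing R] {a b : ℕ} {x e : ℕ → R}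

theorem exists_fwdDiff_nonpos_of_orthogonal (hab : a < b) (hx : StrictMonoOn x (Icc a b))
    (sum_e : ∑ s ∈ Icc a b, e s = 0) (sum_x_mul_e : ∑ s ∈ Icc a b, x s * e s = 0) :
    ∃ i ∈ Ico a b, Δ_[1] e i ≤ 0 := by
  by_contra! increasing
  have he : StrictMonoOn e (Icc a b) := by
    rw [coe_Icc]
    exact strictMonoOn_of_lt_add_one Set.ordConnected_Icc fun i _ hi hi' =>
      sub_pos.1 (increasing i (mem_Ico.2 ⟨hi.1, hi'.2⟩))
  have chebyshev := sum_mul_sum_lt_card_mul_sum_of_strictMonoOn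
    (nontrivial_Icc_of_lt hab) hx he
  simp [sum_e, sum_x_mul_e] at chebyshev

theorem abs_le_mul_sum_abs_fwdDiff_fwdDiff_of_orthogonal (hab : a < b)
    (hx : StrictMonoOn x (Icc a b)) (sum_e : ∑ s ∈ Icc a b, e s = 0)
    (sum_x_mul_e : ∑ s ∈ Icc a b, x s * e s = 0) {t : ℕ} (ht : t ∈ Icc a b) :
    |e t| ≤ (b - a) * ∑ s ∈ Ico a (b - 1), |Δ_[1] (Δ_[1] e) s| := by
  have ico_eq_icc : Ico a b = Icc a (b - 1) := by ext; grind
  obtain ⟨i, hi, slope_i⟩ := exists_fwdDiff_nonpos_of_orthogonal hab hx sum_e sum_x_mul_e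
  obtain ⟨j, hj, slope_j⟩ := exists_fwdDiff_nonpos_of_orthogonal (e := -e) hab hx
    (by simp [sum_e]) (by simp [sum_x_mul_e])
  replace slope_j : 0 ≤ Δ_[1] e j := by simpa [fwdDiff] using slope_j
  have slope_le : ∀ s ∈ Ico a b, |Δ_[1] e s| ≤ ∑ r ∈ Ico a (b - 1), |Δ_[1] (Δ_[1] e) r| := by
    rw [ico_eq_icc] at hi hj ⊢
    exact fun s hs => abs_le_sum_abs_fwdDiff_of_sign_change hi slope_i hj slope_j hs
  have nonempty : (Icc a b).Nonempty := ⟨t, ht⟩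
  obtain ⟨p, hp, e_p⟩ := exists_le_of_sum_le (f := e) (g := 0) nonempty (by simp [sum_e])
  obtain ⟨q, hq, e_q⟩ := exists_le_of_sum_le (f := 0) (g := e) nonempty (by simp [sum_e])
  calc |e t| ≤ ∑ s ∈ Ico a b, |Δ_[1] e s| :=
        abs_le_sum_abs_fwdDiff_of_sign_change hp e_p hq e_q ht
    _ ≤ #(Ico a b) • ∑ s ∈ Ico a (b - 1), |Δ_[1] (Δ_[1] e) s| := sum_le_card_nsmul _ _ _ slope_le
    _ = (b - a) * ∑ s ∈ Ico a (b - 1), |Δ_[1] (Δ_[1] e) s| := by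
        rw [Nat.card_Ico, nsmul_eq_mul, Nat.cast_sub hab.le]

end Orthogonal

theorem tv2_nonneg (u : ℕ → ℝ) (a b : ℕ) : 0 ≤ tv2 u a b :=
  sum_nonneg fun _ _ => abs_nonneg _

-- Only an inequality: for `a = 0` and `b ≤ 1` the truncated `b - 2` leaves a term in `tv2`.
theorem sum_abs_fwdDiff_fwdDiff_le_tv2 (u : ℕ → ℝ) (a b : ℕ) :
    ∑ s ∈ Ico a (b - 1), |Δ_[1] (Δ_[1] u) s| ≤ tv2 u a b := by
  have second_difference (s : ℕ) : Δ_[1] (Δ_[1] u) s = u (s + 2) - 2 * u (s + 1) + u s := by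
    simp only [fwdDiff]
    ring
  simp only [tv2, ← second_difference]
  exact sum_le_sum_of_subset_of_nonneg (fun s hs => by grind) fun _ _ _ => abs_nonneg _

theorem tv2_dotProduct_xv_sub (β : Fin 2 → ℝ) (u : ℕ → ℝ) (a₀ a b : ℕ) :
    tv2 (fun s => β ⬝ᵥ xv a₀ s - u s) a b = tv2 u a b := by
  refine sum_congr rfl fun s _ => ?_
  rw [← abs_neg]
  congr 1
  simp only [xv, vec2_dotProduct, cons_val_zero, cons_val_one]
  push_cast
  ring

theorem strictMono_xv_one (a : ℕ) : StrictMono fun s => xv a s 1 := fun s r hsr => by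
  simpa [xv] using hsr

theorem least_squares_residual_bound_general {a b : ℕ} (hab : a < b) (u : ℕ → ℝ) (β : Fin 2 → ℝ)
    (hβ : β = ((∑ s ∈ Finset.Icc a b, Matrix.vecMulVec (xv a s) (xv a s))⁻¹).mulVec
        (∑ s ∈ Finset.Icc a b, u s • xv a s)) :
    ∀ t ∈ Finset.Icc a b,
      |(∑ i, β i * xv a t i) - u t| ≤ ((b : ℝ) - (a : ℝ)) * tv2 u a b := by
  intro t ht
  have hx := strictMono_xv_one a
  have det_pos : 0 < (∑ s ∈ Icc a b, vecMulVec (xv a s) (xv a s)).det :=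
    det_sum_vecMulVec_one_pos (nontrivial_Icc_of_lt hab) hx.injective.injOn
  set e : ℕ → ℝ := fun s => β ⬝ᵥ xv a s - u s
  have normal : ∑ s ∈ Icc a b, e s • xv a s = 0 :=
    sum_residual_smul_eq_zero det_pos.ne'.isUnit hβ
  have sum_e : ∑ s ∈ Icc a b, e s = 0 := by simpa [xv] using congrFun normal 0
  have sum_x_mul_e : ∑ s ∈ Icc a b, xv a s 1 * e s = 0 := by
    simpa [mul_comm] using congrFun normal 1
  have coeff_nonneg : (0 : ℝ) ≤ b - a := sub_nonneg.2 (Nat.cast_le.2 hab.le)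
  calc |e t| ≤ (b - a) * ∑ s ∈ Ico a (b - 1), |Δ_[1] (Δ_[1] e) s| :=
        abs_le_mul_sum_abs_fwdDiff_fwdDiff_of_orthogonal hab (hx.strictMonoOn _) sum_e
          sum_x_mul_e ht
    _ ≤ (b - a) * tv2 e a b :=
        mul_le_mul_of_nonneg_left (sum_abs_fwdDiff_fwdDiff_le_tv2 e a b) coeff_nonneg
    _ = (b - a) * tv2 u a b := by rw [tv2_dotProduct_xv_sub]

/-!
Lemma (least-squares residual bound).  Let `ℓ = b - a + 1 ≥ 6` and let
`β = (XᵀX)⁻¹ Xᵀ u_{a:b}` be the least-squares coefficient fitting the labels `u_t` against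
the covariates `x_t = [1, t - a + 1]ᵀ`.  Then every residual satisfies
`|βᵀ x_t - u_t| ≤ 20 ℓ ‖D² u_{a:b}‖₁`.
-/
theorem least_squares_residual_bound (a b : ℕ) (hab : a ≤ b) (hlen : 6 ≤ b - a + 1)
    (u : ℕ → ℝ) (β : Fin 2 → ℝ)
    (hβ : β = ((∑ s ∈ Finset.Icc a b, Matrix.vecMulVec (xv a s) (xv a s))⁻¹).mulVec
        (∑ s ∈ Finset.Icc a b, u s • xv a s)) :
    ∀ t ∈ Finset.Icc a b,
      |(∑ i, β i * xv a t i) - u t| ≤ 20 * ((b : ℝ) - (a : ℝ) + 1) * tv2 u a b :=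
  fun t ht => (least_squares_residual_bound_general (by omega) u β hβ t ht).trans
    (mul_le_mul_of_nonneg_right (by linarith [Nat.cast_le (α := ℝ).2 hab]) (tv2_nonneg u a b))
end

section
/- Lemma (a low-TV¹ sequence touching one boundary stays away from the other). Let ℓ ≥ 1 and let w_1,…,w_ℓ ∈ [−1,1] satisfy ‖D² w_{1:ℓ}‖₁ ≤ ℓ^{−3/2}. If w_r = −1 for some index r with 2 ≤ r ≤ ℓ, then w_s ≤ −1 + ℓ^{−1/2} for all s with r ≤ s ≤ ℓ; in particular w_s < 1 for all s ≥ r. Symmetrically, if w_r = 1 for some 2 ≤ r ≤ ℓ, then w_s ≥ 1 − ℓ^{−1/2} for all r ≤ s ≤ ℓ. -/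
/-!
From an index `r` on, the sequence `w` follows its linear extrapolation from `r - 1` and `r`: each
later increment differs from `w r - w (r - 1)` by at most `‖D² w‖₁ ≤ ℓ^{-3/2}`, and at most `ℓ` of
these errors add up to `ℓ^{-1/2}`. If `w r` is an extreme value of `w`, the increment
`w r - w (r - 1)` points away from the interior, and so does the extrapolation.
-/

open fwdDiff

theorem fwdDiff_iter_two_apply {M G : Type*} [AddCommMonoid M] [AddCommGroup G] (h : M) (f : M → G)
    (x : M) : Δ_[h] ^[2] f x = f (x + 2 • h) - 2 • f (x + h) + f x := by
  simp only [Function.iterate_succ, Function.iterate_zero, Function.comp_apply, id_eq, fwdDiff,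
    two_nsmul, add_assoc]
  abel

section SeminormedAddCommGroup

variable {E : Type*} [SeminormedAddCommGroup E] (w : ℕ → E) {p r s t : ℕ}

theorem norm_fwdDiff_sub_fwdDiff_le_sum (hpt : p ≤ t) :
    ‖Δ_[1] w t - Δ_[1] w p‖ ≤ ∑ j ∈ Finset.Ico p t, ‖Δ_[1] ^[2] w j‖ := by
  have hsecond (j : ℕ) : Δ_[1] ^[2] w j = Δ_[1] w (j + 1) - Δ_[1] w j := rfl
  simpa only [hsecond, dist_eq_norm_sub'] using dist_le_Ico_sum_dist (Δ_[1] w) hpt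

theorem norm_sub_linear_extrapolation_le (hpr : p ≤ r) (hrs : r ≤ s) :
    ‖w s - w r - (s - r) • Δ_[1] w p‖ ≤
      (s - r) • ∑ j ∈ Finset.Ico p (s - 1), ‖Δ_[1] ^[2] w j‖ := by
  have hsum : w s - w r - (s - r) • Δ_[1] w p =
      ∑ t ∈ Finset.Ico r s, (Δ_[1] w t - Δ_[1] w p) := by
    rw [Finset.sum_sub_distrib, Finset.sum_const, Nat.card_Ico]
    exact congrArg (· - _) (Finset.sum_Ico_sub w hrs).symm
  rw [hsum, ← Nat.card_Ico]
  refine (norm_sum_le _ _).trans (Finset.sum_le_card_nsmul _ _ _ fun t ht ↦ ?_)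
  obtain ⟨hrt, hts⟩ := Finset.mem_Ico.1 ht
  calc ‖Δ_[1] w t - Δ_[1] w p‖
      ≤ ∑ j ∈ Finset.Ico p t, ‖Δ_[1] ^[2] w j‖ :=
        norm_fwdDiff_sub_fwdDiff_le_sum w (hpr.trans hrt)
    _ ≤ ∑ j ∈ Finset.Ico p (s - 1), ‖Δ_[1] ^[2] w j‖ :=
        Finset.sum_le_sum_of_subset_of_nonneg
          (Finset.Ico_subset_Ico_right (Nat.le_sub_one_of_lt hts)) fun _ _ _ ↦ norm_nonneg _

end SeminormedAddCommGroup

theorem abs_sub_linear_extrapolation_le_rpow {ℓ r s : ℕ} {w : ℕ → ℝ}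
    (htv : (∑ t ∈ Finset.Icc 1 (ℓ - 2), |w (t + 2) - 2 * w (t + 1) + w t|)
        ≤ (ℓ : ℝ) ^ (-(3 : ℝ) / 2))
    (hr : 2 ≤ r) (hrs : r ≤ s) (hs : s ≤ ℓ) :
    |w s - w r - (s - r : ℕ) * (w r - w (r - 1))| ≤ (ℓ : ℝ) ^ (-(1 : ℝ) / 2) := by
  have hstep : Δ_[1] w (r - 1) = w r - w (r - 1) := by
    rw [fwdDiff, Nat.sub_add_cancel (by omega)]
  have hsub : Finset.Ico (r - 1) (s - 1) ⊆ Finset.Icc 1 (ℓ - 2) := fun j hj ↦ by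
    simp only [Finset.mem_Ico, Finset.mem_Icc] at hj ⊢
    omega
  have hexp : 1 + -(3 : ℝ) / 2 = -1 / 2 := by norm_num
  calc |w s - w r - (s - r : ℕ) * (w r - w (r - 1))|
      ≤ (s - r : ℕ) * ∑ j ∈ Finset.Ico (r - 1) (s - 1), |w (j + 2) - 2 * w (j + 1) + w j| := by
        simpa only [hstep, fwdDiff_iter_two_apply, nsmul_eq_mul, Nat.cast_ofNat, mul_one,
          Real.norm_eq_abs] using norm_sub_linear_extrapolation_le w (r.sub_le 1) hrs
    _ ≤ ℓ * (ℓ : ℝ) ^ (-(3 : ℝ) / 2) := by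
        gcongr
        · omega
        · exact (Finset.sum_le_sum_of_subset_of_nonneg hsub fun _ _ _ ↦ abs_nonneg _).trans htv
    _ = (ℓ : ℝ) ^ (-(1 : ℝ) / 2) := by
        rw [← Real.rpow_one_add' ℓ.cast_nonneg (by norm_num), hexp]

theorem low_tv1_one_boundary_general {ℓ : ℕ} {w : ℕ → ℝ}
    (htv : (∑ t ∈ Finset.Icc 1 (ℓ - 2), |w (t + 2) - 2 * w (t + 1) + w t|)
        ≤ (ℓ : ℝ) ^ (-(3 : ℝ) / 2)) :
    (∀ r, 2 ≤ r → w r ≤ w (r - 1) →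
      ∀ s, r ≤ s → s ≤ ℓ → w s ≤ w r + (ℓ : ℝ) ^ (-(1 : ℝ) / 2) ∧ w s < w r + 1) ∧
    (∀ r, 2 ≤ r → w (r - 1) ≤ w r →
      ∀ s, r ≤ s → s ≤ ℓ → w r - (ℓ : ℝ) ^ (-(1 : ℝ) / 2) ≤ w s) := by
  refine ⟨fun r hr hprev s hrs hs ↦ ?_, fun r hr hprev s hrs hs ↦ ?_⟩
  · have hdev := (abs_le.1 (abs_sub_linear_extrapolation_le_rpow htv hr hrs hs)).2
    have hdrift : ((s - r : ℕ) : ℝ) * (w r - w (r - 1)) ≤ 0 :=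
      mul_nonpos_of_nonneg_of_nonpos (Nat.cast_nonneg _) (sub_nonpos.2 hprev)
    have hone : (ℓ : ℝ) ^ (-(1 : ℝ) / 2) < 1 :=
      Real.rpow_lt_one_of_one_lt_of_neg (mod_cast (by omega : 1 < ℓ)) (by norm_num)
    constructor <;> linarith
  · have hdev := (abs_le.1 (abs_sub_linear_extrapolation_le_rpow htv hr hrs hs)).1
    have hdrift : 0 ≤ ((s - r : ℕ) : ℝ) * (w r - w (r - 1)) :=
      mul_nonneg (Nat.cast_nonneg _) (sub_nonneg.2 hprev)
    linarith

/-!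
Lemma (a low-TV¹ sequence touching one boundary stays away from the other).
If `w_1, …, w_ℓ ∈ [-1,1]` has `‖D² w_{1:ℓ}‖₁ ≤ ℓ^{-3/2}` and `w_r = -1` for some
`2 ≤ r ≤ ℓ`, then `w_s ≤ -1 + ℓ^{-1/2}` (hence `w_s < 1`) for all `r ≤ s ≤ ℓ`;
symmetrically for touching `1`.
-/
theorem low_tv1_one_boundary (ℓ : ℕ) (hℓ : 1 ≤ ℓ) (w : ℕ → ℝ)
    (hbox : ∀ t ∈ Finset.Icc 1 ℓ, w t ∈ Set.Icc (-1 : ℝ) 1)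
    (htv : (∑ t ∈ Finset.Icc 1 (ℓ - 2), |w (t + 2) - 2 * w (t + 1) + w t|)
        ≤ (ℓ : ℝ) ^ (-(3 : ℝ) / 2)) :
    (∀ r, 2 ≤ r → r ≤ ℓ → w r = -1 →
      ∀ s, r ≤ s → s ≤ ℓ → w s ≤ -1 + (ℓ : ℝ) ^ (-(1 : ℝ) / 2) ∧ w s < 1) ∧
    (∀ r, 2 ≤ r → r ≤ ℓ → w r = 1 →
      ∀ s, r ≤ s → s ≤ ℓ → 1 - (ℓ : ℝ) ^ (-(1 : ℝ) / 2) ≤ w s) := by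
  have hprev (r : ℕ) (hr : 2 ≤ r) (hrℓ : r ≤ ℓ) := hbox (r - 1) (Finset.mem_Icc.2 (by omega))
  obtain ⟨hlower, hupper⟩ := low_tv1_one_boundary_general htv
  refine ⟨fun r hr hrℓ hw s hrs hs ↦ ?_, fun r hr hrℓ hw s hrs hs ↦ ?_⟩
  · obtain ⟨hle, hlt⟩ := hlower r hr (hw.trans_le (hprev r hr hrℓ).1) s hrs hs
    constructor <;> linarith
  · simpa only [hw] using hupper r hr ((hprev r hr hrℓ).2.trans_eq hw.symm) s hrs hs
end

section
/- Proposition (embedding of TV¹ into TV⁰). Let w_1,…,w_n ∈ [−1,1]^d be a sequence with n·‖D² w_{1:n}‖₁ ≤ C_n. Then Σ_{t=1}^{n−1} ‖w_{t+1} − w_t‖₁ ≤ 2 C_n + 20 d. Equivalently, TV^{(1)}(C_n) ⊆ TV^{(0)}(2C_n + 20d) whenever the benchmark set satisfies W ⊆ [−1,1]^d. -/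
/-!
The average of the `n - 1` first differences is `(w n - w 1) / (n - 1)`, and any two of them differ
by at most the sum of the norms of the second differences. Hence each first difference exceeds the
average in norm by at most that sum; adding up over `t`, the box only enters through the bound
`‖w n - w 1‖₁ ≤ 2 d`.
-/

open Finset fwdDiff

lemma dist_le_sum_Ico_dist_of_mem_Icc {α : Type*} [PseudoMetricSpace α] (f : ℕ → α)
    {a b s t : ℕ} (hs : s ∈ Icc a b) (ht : t ∈ Icc a b) :
    dist (f s) (f t) ≤ ∑ i ∈ Ico a b, dist (f i) (f (i + 1)) := by
  wlog hst : s ≤ t generalizing s t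
  · rw [dist_comm]
    exact this ht hs (le_of_not_ge hst)
  calc dist (f s) (f t) ≤ ∑ i ∈ Ico s t, dist (f i) (f (i + 1)) := dist_le_Ico_sum_dist f hst
    _ ≤ ∑ i ∈ Ico a b, dist (f i) (f (i + 1)) :=
      sum_le_sum_of_subset_of_nonneg
        (Ico_subset_Ico (mem_Icc.mp hs).1 (mem_Icc.mp ht).2) fun _ _ _ ↦ dist_nonneg

section NormedSpace

variable {E : Type*} [SeminormedAddCommGroup E] [NormedSpace ℝ E]

lemma card_mul_norm_le_norm_sum_add {ι : Type*} (s : Finset ι) (u : ι → E) (x : E) {V : ℝ}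
    (hV : ∀ j ∈ s, dist x (u j) ≤ V) : #s * ‖x‖ ≤ ‖∑ j ∈ s, u j‖ + #s * V := by
  have hsplit : (#s : ℝ) • x = ∑ j ∈ s, u j + ∑ j ∈ s, (x - u j) := by
    rw [← sum_add_distrib]
    simp only [add_sub_cancel, sum_const, Nat.cast_smul_eq_nsmul]
  have hdev : ‖∑ j ∈ s, (x - u j)‖ ≤ #s * V := by
    rw [← nsmul_eq_mul, ← sum_const]
    exact norm_sum_le_of_le s fun j hj ↦ (dist_eq_norm x (u j)).symm.trans_le (hV j hj)
  calc #s * ‖x‖ = ‖(#s : ℝ) • x‖ := by rw [norm_smul, Real.norm_natCast]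
    _ ≤ ‖∑ j ∈ s, u j‖ + ‖∑ j ∈ s, (x - u j)‖ := hsplit ▸ norm_add_le _ _
    _ ≤ ‖∑ j ∈ s, u j‖ + #s * V := by gcongr

lemma sum_norm_le_norm_sum_add_card_mul {ι : Type*} (s : Finset ι) (u : ι → E) {V : ℝ}
    (hV : ∀ i ∈ s, ∀ j ∈ s, dist (u i) (u j) ≤ V) :
    ∑ i ∈ s, ‖u i‖ ≤ ‖∑ i ∈ s, u i‖ + #s * V := by
  rcases s.eq_empty_or_nonempty with rfl | hs
  · simp
  have hcard : (0 : ℝ) < #s := by exact_mod_cast hs.card_pos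
  refine le_of_mul_le_mul_left ?_ hcard
  rw [mul_sum, ← nsmul_eq_mul (#s) (_ + _)]
  exact sum_le_card_nsmul _ _ _ fun i hi ↦ card_mul_norm_le_norm_sum_add s u (u i) (hV i hi)

lemma sum_norm_fwdDiff_le (f : ℕ → E) {a b : ℕ} (hab : a ≤ b) :
    ∑ t ∈ Ico a b, ‖Δ_[1] f t‖ ≤
      ‖f b - f a‖ + (b - a : ℕ) * ∑ t ∈ Ico a (b - 1), ‖Δ_[1] (Δ_[1] f) t‖ := by
  have hpair : ∀ s ∈ Ico a b, ∀ t ∈ Ico a b,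
      dist (Δ_[1] f s) (Δ_[1] f t) ≤ ∑ i ∈ Ico a (b - 1), ‖Δ_[1] (Δ_[1] f) i‖ := by
    intro s hs t ht
    rw [mem_Ico] at hs ht
    simpa only [dist_eq_norm', fwdDiff] using dist_le_sum_Ico_dist_of_mem_Icc (Δ_[1] f)
      (mem_Icc.mpr ⟨hs.1, Nat.le_sub_one_of_lt hs.2⟩)
      (mem_Icc.mpr ⟨ht.1, Nat.le_sub_one_of_lt ht.2⟩)
  have htelescope : ∑ t ∈ Ico a b, Δ_[1] f t = f b - f a := sum_Ico_sub f hab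
  simpa only [htelescope, Nat.card_Ico] using sum_norm_le_norm_sum_add_card_mul _ _ hpair

end NormedSpace

section Coordinates

variable {ι : Type*} [Fintype ι]

lemma sum_abs_sub_le_card_mul {x y : ι → ℝ} {r : ℝ} (hx : ∀ k, |x k| ≤ r)
    (hy : ∀ k, |y k| ≤ r) : ∑ k, |x k - y k| ≤ Fintype.card ι * (2 * r) := by
  rw [← nsmul_eq_mul]
  refine sum_le_card_nsmul _ _ _ fun k _ ↦ (abs_sub _ _).trans ?_
  linarith [hx k, hy k]

theorem tv1_embeds_into_tv0_general (n : ℕ) (hn : 1 ≤ n) (w : ℕ → ι → ℝ) (Cn : ℝ)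
    (htv1 : (n : ℝ) *
        (∑ t ∈ Icc 1 (n - 2), ∑ k, |w (t + 2) k - 2 * w (t + 1) k + w t k|) ≤ Cn) :
    ∑ t ∈ Icc 1 (n - 1), ∑ k, |w (t + 1) k - w t k| ≤ ∑ k, |w n k - w 1 k| + Cn := by
  have hIcc (m : ℕ) : Icc 1 (m - 1) = Ico 1 m := by
    ext t
    simp only [mem_Icc, mem_Ico]
    omega
  have hsecond (t : ℕ) (k : ι) : w (t + 1 + 1) k - w (t + 1) k - (w (t + 1) k - w t k) =
      w (t + 2) k - 2 * w (t + 1) k + w t k := by ring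
  have hl1 : ∑ t ∈ Icc 1 (n - 1), ∑ k, |w (t + 1) k - w t k| ≤ ∑ k, |w n k - w 1 k| +
      (n - 1 : ℕ) * ∑ t ∈ Icc 1 (n - 2), ∑ k, |w (t + 2) k - 2 * w (t + 1) k + w t k| := by
    simpa only [fwdDiff, PiLp.norm_eq_of_L1, PiLp.sub_apply, Real.norm_eq_abs, hsecond, ← hIcc,
      Nat.sub_sub, Nat.reduceAdd] using sum_norm_fwdDiff_le (fun t ↦ WithLp.toLp 1 (w t)) hn
  refine hl1.trans (add_le_add_right (le_trans ?_ htv1) _)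
  gcongr
  exact Nat.sub_le n 1

end Coordinates

/-!
Proposition (embedding of TV¹ into TV⁰).
If `w_1, …, w_n ∈ [-1,1]^d` satisfies `n · ‖D² w_{1:n}‖₁ ≤ C_n`, then
`Σ_{t=1}^{n-1} ‖w_{t+1} - w_t‖₁ ≤ 2 C_n + 20 d`.
-/
theorem tv1_embeds_into_tv0 (d n : ℕ) (hd : 1 ≤ d) (hn : 1 ≤ n)
    (w : ℕ → Fin d → ℝ) (Cn : ℝ)
    (hbox : ∀ t ∈ Finset.Icc 1 n, ∀ k, |w t k| ≤ 1)
    (htv1 : (n : ℝ) *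
        (∑ t ∈ Finset.Icc 1 (n - 2), ∑ k, |w (t + 2) k - 2 * w (t + 1) k + w t k|) ≤ Cn) :
    (∑ t ∈ Finset.Icc 1 (n - 1), ∑ k, |w (t + 1) k - w t k|) ≤ 2 * Cn + 20 * d := by
  have hends := sum_abs_sub_le_card_mul
    (hbox n (mem_Icc.mpr ⟨hn, le_rfl⟩)) (hbox 1 (mem_Icc.mpr ⟨le_rfl, hn⟩))
  rw [Fintype.card_fin] at hends
  have hCn : 0 ≤ Cn := le_trans (by positivity) htv1
  linarith [tv1_embeds_into_tv0_general n hn w Cn htv1, d.cast_nonneg (α := ℝ)]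
end

section
/- Claim (linear regret of OGD with large step size). Let the decision set be D = [−1,1] ⊂ ℝ, let y_t = −1 for odd t and y_t = 1 for even t, and let the losses be f_t(x) = (x − y_t)²/2. Consider projected online gradient descent with step size η ≥ 1: w_1 = 0 and w_{t+1} = clip_{[−1,1]}(w_t − η(w_t − y_t)), where clip_{[−1,1]}(z) = max(−1, min(1, z)). Then w_2 = −1 and the iterates alternate w_t = (−1)^t for t ≥ 2, and for every n ≥ 2 the static regret against the fixed comparator 0 satisfies Σ_{t=1}^n ( f_t(w_t) − f_t(0) ) ≥ 3n/4. -/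
/-!
When the label is an endpoint of the decision interval, a gradient step of size at least `1` reaches
or overshoots it, and the projection brings the iterate back exactly onto it. Hence
`w_{t+1} = y_t`: the learner replays the previous label. With the labels `y_t = (-1)^t` this makes
it wrong by `2` in every round after the first, which costs `2 - 1/2 = 3/2` more than playing `0`.
In the first round it plays `0` itself, so the regret is exactly `3(n - 1)/2`.
-/

section ProjectedDescent

variable {K : Type*} [Ring K] [LinearOrder K] {a b x y η : K}

/-- One step of projected gradient descent on `[a, b]` from `x`, with step size `η`, for the loss
`z ↦ (z - y)² / 2`. -/
def projectedStep (a b η y x : K) : K := max a (min b (x - η * (x - y)))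

/-- `w` is a run of projected online gradient descent on `[a, b]` with step sizes `η t`, for the
losses `x ↦ (x - y t)² / 2`. Rounds are numbered from `1`; the starting point `w 1` is free. -/
def IsProjectedOGD (a b : K) (η y w : ℕ → K) : Prop :=
  ∀ t, 1 ≤ t → w (t + 1) = projectedStep a b (η t) (y t) (w t)

lemma projectedStep_mem_Icc (hab : a ≤ b) : projectedStep a b η y x ∈ Set.Icc a b :=
  ⟨le_max_left _ _, max_le hab (min_le_left _ _)⟩

lemma IsProjectedOGD.mem_Icc {η y w : ℕ → K} (h : IsProjectedOGD a b η y w)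
    (hw1 : w 1 ∈ Set.Icc a b) {t : ℕ} (ht : 1 ≤ t) : w t ∈ Set.Icc a b := by
  induction t, ht using Nat.le_induction with
  | base => exact hw1
  | succ t ht _ => exact h t ht ▸ projectedStep_mem_Icc (hw1.1.trans hw1.2)

variable [IsOrderedRing K]

lemma projectedStep_left (hη : 1 ≤ η) (hx : a ≤ x) : projectedStep a b η a x = a := by
  have overshoot : x - η * (x - a) ≤ a :=
    sub_le_comm.mp (le_mul_of_one_le_left (sub_nonneg.mpr hx) hη)
  exact max_eq_left (min_le_of_right_le overshoot)

lemma projectedStep_right (hη : 1 ≤ η) (hx : x ≤ b) (hab : a ≤ b) :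
    projectedStep a b η b x = b := by
  have overshoot : b ≤ x - η * (x - b) :=
    le_sub_comm.mp (mul_le_of_one_le_left (sub_nonpos.mpr hx) hη)
  rw [projectedStep, min_eq_left overshoot, max_eq_right hab]

lemma IsProjectedOGD.succ_eq_label {η y w : ℕ → K} (h : IsProjectedOGD a b η y w)
    (hw1 : w 1 ∈ Set.Icc a b) {t : ℕ} (ht : 1 ≤ t) (hη : 1 ≤ η t) (hy : y t = a ∨ y t = b) :
    w (t + 1) = y t := by
  obtain ⟨haw, hwb⟩ := h.mem_Icc hw1 ht
  rw [h t ht]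
  rcases hy with hy | hy <;> rw [hy]
  · exact projectedStep_left hη haw
  · exact projectedStep_right hη hwb (haw.trans hwb)

end ProjectedDescent

lemma sq_eq_sq_one_of_alternating {R : Type*} [Monoid R] [HasDistribNeg R] {y : ℕ → R}
    (hy : ∀ t, 1 ≤ t → y (t + 1) = -y t) {t : ℕ} (ht : 1 ≤ t) : y t ^ 2 = y 1 ^ 2 := by
  induction t, ht using Nat.le_induction with
  | base => rfl
  | succ t ht ih => rw [hy t ht, neg_sq, ih]

section Regret

variable {K : Type*} [Field K]

/-- The static regret over rounds `1, …, n` of the plays `w` against the fixed comparator `u`, for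
the losses `x ↦ (x - y t)² / 2`. -/
def squareLossRegret (y w : ℕ → K) (u : K) (n : ℕ) : K :=
  ∑ t ∈ Finset.Icc 1 n, ((w t - y t) ^ 2 / 2 - (u - y t) ^ 2 / 2)

lemma squareLossRegret_succ (y w : ℕ → K) (u : K) (n : ℕ) :
    squareLossRegret y w u (n + 1) = squareLossRegret y w u n +
      ((w (n + 1) - y (n + 1)) ^ 2 / 2 - (u - y (n + 1)) ^ 2 / 2) :=
  Finset.sum_Icc_succ_top (Nat.le_add_left 1 n) _

lemma squareLossRegret_zero_of_replay_alternating {y w : ℕ → K}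
    (hy : ∀ t, 1 ≤ t → y (t + 1) = -y t) (hw1 : w 1 = 0) (hw : ∀ t, 1 ≤ t → w (t + 1) = y t)
    {n : ℕ} (hn : 1 ≤ n) : squareLossRegret y w 0 n = 3 / 2 * ((n : K) - 1) * y 1 ^ 2 := by
  induction n, hn using Nat.le_induction with
  | base => simp [squareLossRegret, hw1]
  | succ n hn ih =>
    calc squareLossRegret y w 0 (n + 1)
        = 3 / 2 * ((n : K) - 1) * y 1 ^ 2 + ((y n - -y n) ^ 2 / 2 - (0 - -y n) ^ 2 / 2) := by
          rw [squareLossRegret_succ, ih, hw n hn, hy n hn]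
      _ = 3 / 2 * ((n : K) - 1) * y 1 ^ 2 + 3 / 2 * y n ^ 2 := by ring
      _ = 3 / 2 * (((n + 1 : ℕ) : K) - 1) * y 1 ^ 2 := by
          rw [sq_eq_sq_one_of_alternating hy hn]
          push_cast
          ring

end Regret

theorem ogd_large_step_linear_regret_general {K : Type*} [Field K] [LinearOrder K]
    [IsStrictOrderedRing K] {η y w : ℕ → K} (hη : ∀ t, 1 ≤ t → 1 ≤ η t)
    (hy : ∀ t, y t = if Odd t then -1 else 1) (hw1 : w 1 = 0)
    (hrec : IsProjectedOGD (-1) 1 η y w) :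
    w 2 = -1 ∧ (∀ t, 2 ≤ t → w t = (-1) ^ (t + 1)) ∧
      ∀ n : ℕ, 2 ≤ n → 3 * (n : K) / 4 ≤ squareLossRegret y w 0 n := by
  obtain rfl : y = fun t ↦ (-1) ^ t :=
    funext fun t ↦ by simp only [hy, neg_one_pow_eq_ite, ← Nat.not_even_iff_odd, ite_not]
  have alternating (t : ℕ) (_ : 1 ≤ t) : (-1 : K) ^ (t + 1) = -(-1) ^ t := by
    rw [pow_succ', neg_one_mul]
  have hmem : w 1 ∈ Set.Icc (-1 : K) 1 := by simp [hw1]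
  have replay (t : ℕ) (ht : 1 ≤ t) : w (t + 1) = (-1) ^ t :=
    hrec.succ_eq_label hmem ht (hη t ht) (neg_one_pow_eq_or K t).symm
  refine ⟨by simpa using replay 1 le_rfl, fun t ht ↦ ?_, fun n hn ↦ ?_⟩
  · obtain ⟨s, rfl⟩ := Nat.exists_eq_add_of_le' (one_le_two.trans ht)
    rw [replay s (by omega), pow_add _ s 2, neg_one_sq, mul_one]
  · have hn' : (2 : K) ≤ n := by exact_mod_cast hn
    calc 3 * (n : K) / 4 ≤ 3 / 2 * (n - 1) := by linarith
      _ = squareLossRegret (fun t ↦ (-1) ^ t) w 0 n := by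
        rw [squareLossRegret_zero_of_replay_alternating alternating hw1 replay
          (one_le_two.trans hn), pow_one, neg_one_sq, mul_one]

/-!
Claim: linear regret of projected OGD with step size `η ≥ 1` on the decision set `[-1,1]`,
against the alternating labels `y_t = -1` (t odd), `y_t = 1` (t even), with losses
`f_t(x) = (x - y_t)²/2`.  The iterates alternate (`w_2 = -1`, then alternating sign),
and the static regret against the fixed comparator `0` is at least `3n/4` for all `n ≥ 2`.
-/
theorem ogd_large_step_linear_regret (η : ℝ) (hη : 1 ≤ η)
    (y : ℕ → ℝ) (hy : ∀ t, y t = if Odd t then -1 else 1)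
    (w : ℕ → ℝ) (hw1 : w 1 = 0)
    (hrec : ∀ t, 1 ≤ t → w (t + 1) = max (-1) (min 1 (w t - η * (w t - y t)))) :
    w 2 = -1 ∧ (∀ t, 2 ≤ t → w t = (-1 : ℝ) ^ (t + 1)) ∧
      ∀ n : ℕ, 2 ≤ n →
        (3 * (n : ℝ)) / 4 ≤
          ∑ t ∈ Finset.Icc 1 n, ((w t - y t) ^ 2 / 2 - ((0 : ℝ) - y t) ^ 2 / 2) :=
  ogd_large_step_linear_regret_general (η := fun _ ↦ η) (fun _ _ ↦ hη) hy hw1 hrec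
end
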